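/- Projection-error bound: let y, z, w be unit vectors in ℝ^d with yᵀw ≥ zᵀw ≥ 0 and yᵀz ≥ 0. Then for any x ∈ ℝ^d with x = ‖x‖·y one has ‖x − (xᵀz)z‖² = ‖x‖²(1 − (yᵀz)²) ≤ 8‖x‖²(1 − zᵀw) ≤ 8‖x‖²(1 − (zᵀw)²). -/

import Mathlib

open scoped RealInnerProductSpace

/-- For unit vectors, `‖y - z‖² ≤ 2 (‖y - w‖² + ‖z - w‖²)` in terms of inner products. -/
theorem one_sub_inner_le_of_norm_eq_one {E : Type*} [NormedAddCommGroup E]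
    [InnerProductSpace ℝ E] {y z w : E} (hy : ‖y‖ = 1) (hz : ‖z‖ = 1) (hw : ‖w‖ = 1) :
    1 - ⟪y, z⟫ ≤ 2 * (1 - ⟪y, w⟫) + 2 * (1 - ⟪z, w⟫) := by
  have h : 0 ≤ ‖y + z - (2 : ℝ) • w‖ ^ 2 := sq_nonneg _
  rw [norm_sub_sq_real, norm_add_sq_real, norm_smul, inner_smul_right, inner_add_left,
    hy, hz, hw] at h
  norm_num at h
  linarith

/-- The squared distance from `x` to its projection onto the line spanned by a unit vector. -/
theorem norm_sub_inner_smul_sq {E : Type*} [NormedAddCommGroup E] [InnerProductSpace ℝ E]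
    (x : E) {z : E} (hz : ‖z‖ = 1) :
    ‖x - ⟪x, z⟫ • z‖ ^ 2 = ‖x‖ ^ 2 - ⟪x, z⟫ ^ 2 := by
  rw [norm_sub_sq_real, norm_smul, inner_smul_right, hz, mul_one, Real.norm_eq_abs, sq_abs]
  ring

/-- projection-error bound. -/
theorem projection_error_bound
    (d : ℕ) (y z w : EuclideanSpace ℝ (Fin d))
    (hy : ‖y‖ = 1) (hz : ‖z‖ = 1) (hw : ‖w‖ = 1)
    (h1 : ⟪y, w⟫ ≥ ⟪z, w⟫) (h2 : ⟪z, w⟫ ≥ 0) (h3 : ⟪y, z⟫ ≥ 0)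
    (x : EuclideanSpace ℝ (Fin d)) (hx : x = ‖x‖ • y) :
    ‖x - ⟪x, z⟫ • z‖ ^ 2 = ‖x‖ ^ 2 * (1 - ⟪y, z⟫ ^ 2) ∧
    ‖x‖ ^ 2 * (1 - ⟪y, z⟫ ^ 2) ≤ 8 * ‖x‖ ^ 2 * (1 - ⟪z, w⟫) ∧
    8 * ‖x‖ ^ 2 * (1 - ⟪z, w⟫) ≤ 8 * ‖x‖ ^ 2 * (1 - ⟪z, w⟫ ^ 2) := by
  have hxz : ⟪x, z⟫ = ‖x‖ * ⟪y, z⟫ := by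
    conv_lhs => rw [hx, real_inner_smul_left]
  have hzw : ⟪z, w⟫ ≤ 1 := by
    simpa [hz, hw] using real_inner_le_norm z w
  have hyzw := one_sub_inner_le_of_norm_eq_one hy hz hw
  refine ⟨?_, ?_, ?_⟩
  · rw [norm_sub_inner_smul_sq x hz, hxz]
    ring
  · have hyz : 1 - ⟪y, z⟫ ^ 2 ≤ 8 * (1 - ⟪z, w⟫) := by
      nlinarith [sq_nonneg (1 - ⟪y, z⟫)]
    calc ‖x‖ ^ 2 * (1 - ⟪y, z⟫ ^ 2) ≤ ‖x‖ ^ 2 * (8 * (1 - ⟪z, w⟫)) := by gcongr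
      _ = 8 * ‖x‖ ^ 2 * (1 - ⟪z, w⟫) := by ring
  · have hsq : ⟪z, w⟫ ^ 2 ≤ ⟪z, w⟫ := by nlinarith
    gcongr
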